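/- Context reduction for LBV: for every structure P and every context C{ } such that C{P} is provable in LBV, there exists a structure U such that (a) for every structure X there is a derivation in LBV with premise [U,X] and conclusion C{X}, and (b) [U,P] is provable in LBV. -/

import Mathlib

/-!
Context reduction follows by induction on the context from *splitting*: if `[(P,Q),K]` is
provable, then there are `K₁, K₂` with `[P,K₁]` and `[Q,K₂]` provable and a derivation from
`[K₁,K₂]` to `K`.  A par around the hole is moved into a side structure `K`, and a copar is removed
by splitting.

Splitting is easy for a cut-free sequent calculus, multiplicative linear logic with mix and a
self-dual unit, by induction on proofs.  That LBV-provability implies cut-free provability is shown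
semantically, in the style of Okada, instead of by eliminating cuts: LBV is sound for every phase
space whose pole is a submonoid, and in the phase space of sequents whose pole consists of the
cut-free provable ones, every sequent `Γ` in the interpretation of `P` satisfies `⊢ Γ, P`.
-/

/-!
The deep-inference system LBV (the `BV`-free core system of the calculus of
structures of Guglielmi).  Structures are built from the unit `◦`, atoms `a`
and negated atoms `ā` by par `[P,Q]` and copar `(P,Q)`, and are identified
modulo the congruence generated by associativity, commutativity and the
unit laws `[P,◦]=P`, `(P,◦)=P`.  The rules `ai↓`, `s` (and the atomic cut
`ai↑`) apply inside an arbitrary one-hole context and modulo the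
equivalence.
-/

namespace LBV

/-- Structures: the unit `◦`, atoms, negated atoms, par `[P,Q]` and
copar `(P,Q)`. -/
inductive St : Type where
  | unit : St
  | pos  : ℕ → St
  | neg  : ℕ → St
  | par  : St → St → St
  | cop  : St → St → St
deriving DecidableEq

/-- Negation: `¬◦ = ◦`, `¬[P,Q] = (¬P,¬Q)`, `¬(P,Q) = [¬P,¬Q]`, `¬¬P = P`. -/
def St.negS : St → St
  | .unit => .unit
  | .pos a => .neg a
  | .neg a => .pos a
  | .par P Q => .cop P.negS Q.negS
  | .cop P Q => .par P.negS Q.negS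

/-- Atoms are the propositional symbols and their negations. -/
def St.isAtom : St → Prop
  | .pos _ => True
  | .neg _ => True
  | _ => False

/-- Syntactic equivalence of structures: the smallest congruence generated
by associativity and commutativity of par and copar and the unit laws
`[P,◦]=P` and `(P,◦)=P`. -/
inductive Equiv : St → St → Prop where
  | refl (P : St) : Equiv P P
  | symm {P Q : St} : Equiv P Q → Equiv Q P
  | trans {P Q R : St} : Equiv P Q → Equiv Q R → Equiv P R
  | parComm (P Q : St) : Equiv (.par P Q) (.par Q P)
  | copComm (P Q : St) : Equiv (.cop P Q) (.cop Q P)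
  | parAssoc (P Q R : St) : Equiv (.par (.par P Q) R) (.par P (.par Q R))
  | copAssoc (P Q R : St) : Equiv (.cop (.cop P Q) R) (.cop P (.cop Q R))
  | parUnit (P : St) : Equiv (.par P .unit) P
  | copUnit (P : St) : Equiv (.cop P .unit) P
  | parCongr {P P' Q Q' : St} :
      Equiv P P' → Equiv Q Q' → Equiv (.par P Q) (.par P' Q')
  | copCongr {P P' Q Q' : St} :
      Equiv P P' → Equiv Q Q' → Equiv (.cop P Q) (.cop P' Q')

/-- One-hole contexts. -/
inductive Ctx : Type where
  | hole : Ctx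
  | parL : Ctx → St → Ctx
  | parR : St → Ctx → Ctx
  | copL : Ctx → St → Ctx
  | copR : St → Ctx → Ctx

/-- Plugging a structure into the hole of a context. -/
def Ctx.fill : Ctx → St → St
  | .hole, P => P
  | .parL C Q, P => .par (C.fill P) Q
  | .parR Q C, P => .par Q (C.fill P)
  | .copL C Q, P => .cop (C.fill P) Q
  | .copR Q C, P => .cop Q (C.fill P)

/-- Names of the rules: interaction `ai↓`, co-interaction (atomic cut)
`ai↑`, and switch `s`. -/
inductive Rule : Type where
  | aiDown | aiUp | s
deriving DecidableEq

/-- The rules read at the root of a structure (premise on the left,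
conclusion on the right). -/
inductive RootStep : Rule → St → St → Prop where
  | aiDown (A : St) (h : A.isAtom) : RootStep .aiDown .unit (.par A A.negS)
  | aiUp (A : St) (h : A.isAtom) : RootStep .aiUp (.cop A A.negS) .unit
  | s (P Q R : St) : RootStep .s (.cop P (.par Q R)) (.par (.cop P Q) R)

/-- One inference step using a rule from the set `Rs`, applied inside an
arbitrary context and modulo the equivalence. -/
def Step (Rs : Set Rule) (P Q : St) : Prop :=
  ∃ r ∈ Rs, ∃ (C : Ctx) (P' Q' : St),
    RootStep r P' Q' ∧ Equiv P (C.fill P') ∧ Equiv (C.fill Q') Q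

/-- Derivations over an arbitrary step relation: a finite sequence of rule
instances from the premise to the conclusion (modulo the equivalence). -/
inductive Deriv (Stp : St → St → Prop) : St → St → Prop where
  | eqv {P Q : St} : Equiv P Q → Deriv Stp P Q
  | step {P Q R : St} : Stp P Q → Deriv Stp Q R → Deriv Stp P R

/-- The rules of the system LBV. -/
def LBVRules : Set Rule := {.aiDown, .s}

/-- Derivations in LBV. -/
def DerivLBV (P Q : St) : Prop := Deriv (Step LBVRules) P Q

/-- A proof of `Q` in LBV is a derivation from the unit `◦` to `Q`. -/
def ProofLBV (Q : St) : Prop := DerivLBV .unit Q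

end LBV

namespace LBV

open scoped Pointwise

/-! ### Derivations inside contexts -/

/-- Composition of contexts: `C.comp D` is `C{D{ }}`, needed to move a rule instance into a larger
context. -/
def Ctx.comp : Ctx → Ctx → Ctx
  | .hole, D => D
  | .parL C Q, D => .parL (C.comp D) Q
  | .parR Q C, D => .parR Q (C.comp D)
  | .copL C Q, D => .copL (C.comp D) Q
  | .copR Q C, D => .copR Q (C.comp D)

lemma Ctx.fill_comp (C D : Ctx) (P : St) : (C.comp D).fill P = C.fill (D.fill P) := by
  induction C <;> simp_all [comp, fill]

section Derivations

variable {Rs : Set Rule} {P Q R : St}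

lemma Equiv.fill (C : Ctx) (h : Equiv P Q) : Equiv (C.fill P) (C.fill Q) := by
  induction C with
  | hole => exact h
  | parL C R ih => exact .parCongr ih (.refl R)
  | parR R C ih => exact .parCongr (.refl R) ih
  | copL C R ih => exact .copCongr ih (.refl R)
  | copR R C ih => exact .copCongr (.refl R) ih

lemma Step.of_equiv_left (e : Equiv P Q) (s : Step Rs Q R) : Step Rs P R := by
  obtain ⟨r, hr, C, Q', R', root, hQ, hR⟩ := s
  exact ⟨r, hr, C, Q', R', root, e.trans hQ, hR⟩

lemma Step.of_rootStep {r : Rule} (hr : r ∈ Rs) (h : RootStep r P Q) : Step Rs P Q :=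
  ⟨r, hr, .hole, P, Q, h, .refl P, .refl Q⟩

lemma Step.fill (C : Ctx) (s : Step Rs P Q) : Step Rs (C.fill P) (C.fill Q) := by
  obtain ⟨r, hr, D, P', Q', root, hP, hQ⟩ := s
  refine ⟨r, hr, C.comp D, P', Q', root, ?_, ?_⟩
  · simpa only [Ctx.fill_comp] using hP.fill C
  · simpa only [Ctx.fill_comp] using hQ.fill C

lemma Deriv.of_step {Stp : St → St → Prop} (s : Stp P Q) : Deriv Stp P Q :=
  .step s (.eqv (.refl Q))

lemma Deriv.trans (d : Deriv (Step Rs) P Q) (d' : Deriv (Step Rs) Q R) : Deriv (Step Rs) P R := by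
  induction d with
  | eqv e =>
    cases d' with
    | eqv e' => exact .eqv (e.trans e')
    | step s d' => exact .step (s.of_equiv_left e) d'
  | step s _ ih => exact .step s (ih d')

lemma Deriv.fill (C : Ctx) (d : Deriv (Step Rs) P Q) :
    Deriv (Step Rs) (C.fill P) (C.fill Q) := by
  induction d with
  | eqv e => exact .eqv (e.fill C)
  | step s _ ih => exact .step (s.fill C) ih

end Derivations

/-! ### The ordered monoid of structures -/

instance St.setoid : Setoid St := ⟨Equiv, .refl, .symm, .trans⟩

/-- Structures modulo the syntactic equivalence.  They form a commutative monoid under par, with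
neutral element the class of `◦`, and are preordered by derivability: `a ≤ b` says that there is a
derivation with premise `a` and conclusion `b`, so that `0 ≤ a` says that `a` is provable. -/
abbrev StClass : Type := Quotient St.setoid

namespace StClass

instance : Add StClass := ⟨Quotient.map₂ .par fun _ _ h _ _ h' => Equiv.parCongr h h'⟩

instance : Zero StClass := ⟨⟦.unit⟧⟩

instance : AddCommMonoid StClass where
  add_assoc := by rintro ⟨P⟩ ⟨Q⟩ ⟨R⟩; exact Quotient.sound (.parAssoc P Q R)
  add_comm := by rintro ⟨P⟩ ⟨Q⟩; exact Quotient.sound (.parComm P Q)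
  add_zero := by rintro ⟨P⟩; exact Quotient.sound (.parUnit P)
  zero_add := by rintro ⟨P⟩; exact Quotient.sound (.trans (.parComm .unit P) (.parUnit P))
  nsmul := nsmulRec

/-- The operation that copar induces on classes of structures. -/
def cop : StClass → StClass → StClass :=
  Quotient.map₂ .cop fun _ _ h _ _ h' => Equiv.copCongr h h'

lemma mk_unit : (⟦.unit⟧ : StClass) = 0 := rfl

lemma mk_par (P Q : St) : (⟦.par P Q⟧ : StClass) = ⟦P⟧ + ⟦Q⟧ := rfl

lemma mk_cop (P Q : St) : (⟦.cop P Q⟧ : StClass) = cop ⟦P⟧ ⟦Q⟧ := rfl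

lemma cop_comm : ∀ a b : StClass, cop a b = cop b a := by
  rintro ⟨P⟩ ⟨Q⟩
  exact Quotient.sound (.copComm P Q)

lemma cop_zero : ∀ a : StClass, cop a 0 = a := by
  rintro ⟨P⟩
  exact Quotient.sound (.copUnit P)

instance : Preorder StClass where
  le := Quotient.lift₂ DerivLBV fun _ _ _ _ hP hQ => propext
    ⟨fun d => Deriv.trans (.eqv hP.symm) (.trans d (.eqv hQ)),
      fun d => Deriv.trans (.eqv hP) (.trans d (.eqv hQ.symm))⟩
  le_refl := by rintro ⟨P⟩; exact Deriv.eqv (.refl P)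
  le_trans := by rintro ⟨P⟩ ⟨Q⟩ ⟨R⟩; exact Deriv.trans

lemma mk_le_mk {P Q : St} : (⟦P⟧ : StClass) ≤ ⟦Q⟧ ↔ DerivLBV P Q := .rfl

lemma zero_le_mk {P : St} : (0 : StClass) ≤ ⟦P⟧ ↔ ProofLBV P := .rfl

instance : IsOrderedAddMonoid StClass where
  add_le_add_left := by rintro ⟨P⟩ ⟨Q⟩ d ⟨R⟩; exact Deriv.fill (.parL .hole R) d

lemma cop_le_cop_left : ∀ {a b : StClass}, a ≤ b → ∀ c, cop c a ≤ cop c b := by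
  rintro ⟨P⟩ ⟨Q⟩ d ⟨R⟩
  exact Deriv.fill (.copR R .hole) d

lemma cop_add_le : ∀ a b c : StClass, cop a (b + c) ≤ cop a b + c := by
  rintro ⟨P⟩ ⟨Q⟩ ⟨R⟩
  exact Deriv.of_step (.of_rootStep (by simp [LBVRules]) (.s P Q R))

lemma zero_le_pos_add_neg (n : ℕ) : (0 : StClass) ≤ ⟦.pos n⟧ + ⟦.neg n⟧ :=
  Deriv.of_step (.of_rootStep (by simp [LBVRules]) (.aiDown (.pos n) trivial))

lemma add_le_cop_add {b l : StClass} (h : 0 ≤ b + l) (a k : StClass) :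
    a + k ≤ cop a b + (k + l) :=
  calc
    a + k = cop (a + k) 0 := (cop_zero _).symm
    _ ≤ cop (a + k) (b + l) := cop_le_cop_left h _
    _ ≤ cop (a + k) b + l := cop_add_le _ _ _
    _ = cop b (a + k) + l := by rw [cop_comm]
    _ ≤ cop b a + k + l := by gcongr; exact cop_add_le _ _ _
    _ = cop a b + (k + l) := by rw [cop_comm, add_assoc]

/-- The conclusion of the splitting theorem: the side structure `k` of a copar can be reached from
the par of two structures, one for each factor `a` and `b`. -/
def Splits (a b k : StClass) : Prop :=
  ∃ k₁ k₂, 0 ≤ a + k₁ ∧ 0 ≤ b + k₂ ∧ k₁ + k₂ ≤ k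

lemma Splits.mono {a b k l : StClass} (h : Splits a b k) (hkl : k ≤ l) : Splits a b l := by
  obtain ⟨k₁, k₂, h₁, h₂, hk⟩ := h
  exact ⟨k₁, k₂, h₁, h₂, hk.trans hkl⟩

lemma Splits.exists_reduction {a b k : StClass} (h : Splits a b k) :
    ∃ k₁, 0 ≤ a + k₁ ∧ ∀ x, x + k₁ ≤ cop x b + k := by
  obtain ⟨k₁, k₂, h₁, h₂, hk⟩ := h
  refine ⟨k₁, h₁, fun x => (add_le_cop_add h₂ x k₁).trans ?_⟩
  gcongr

end StClass

/-! ### The cut-free sequent calculus -/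

/-- Cut-free provability of one-sided sequents in multiplicative linear logic with nullary (`nil`)
and binary (`mix`) mix and a self-dual unit. -/
inductive CutFree : Multiset St → Prop where
  | nil : CutFree 0
  | ax (n : ℕ) : CutFree {.pos n, .neg n}
  | unit {Γ : Multiset St} : CutFree Γ → CutFree (.unit ::ₘ Γ)
  | par {A B : St} {Γ : Multiset St} : CutFree (A ::ₘ B ::ₘ Γ) → CutFree (.par A B ::ₘ Γ)
  | cop {A B : St} {Γ Δ : Multiset St} :
      CutFree (A ::ₘ Γ) → CutFree (B ::ₘ Δ) → CutFree (.cop A B ::ₘ (Γ + Δ))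
  | mix {Γ Δ : Multiset St} : CutFree Γ → CutFree Δ → CutFree (Γ + Δ)

/-- The class of the par of all structures in a sequent. -/
def parSum (Γ : Multiset St) : StClass := (Γ.map (⟦·⟧)).sum

@[simp] lemma parSum_zero : parSum 0 = 0 := rfl

@[simp] lemma parSum_cons (P : St) (Γ : Multiset St) : parSum (P ::ₘ Γ) = ⟦P⟧ + parSum Γ := by
  simp [parSum]

@[simp] lemma parSum_singleton (P : St) : parSum {P} = ⟦P⟧ := by
  simp [parSum]

@[simp] lemma parSum_add (Γ Δ : Multiset St) : parSum (Γ + Δ) = parSum Γ + parSum Δ := by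
  simp [parSum]

namespace CutFree

variable {Γ : Multiset St}

lemma zero_le_parSum (h : CutFree Γ) : 0 ≤ parSum Γ := by
  induction h with
  | nil => exact le_rfl
  | ax n => simpa using StClass.zero_le_pos_add_neg n
  | unit _ ih => simpa [StClass.mk_unit] using ih
  | par _ ih => simpa [StClass.mk_par, add_assoc] using ih
  | @cop A B Γ Δ _ _ ihA ihB =>
    rw [parSum_cons] at ihA ihB
    simpa [StClass.mk_cop] using ihA.trans (StClass.add_le_cop_add ihB _ _)
  | mix _ _ ihΓ ihΔ => simpa using add_nonneg ihΓ ihΔ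

lemma splits (h : CutFree Γ) {P Q : St} (hmem : .cop P Q ∈ Γ) :
    StClass.Splits ⟦P⟧ ⟦Q⟧ (parSum (Γ.erase (.cop P Q))) := by
  induction h with
  | nil => simp at hmem
  | ax n => simp at hmem
  | unit _ ih =>
    replace hmem := (Multiset.mem_cons.1 hmem).resolve_left (by simp)
    simpa [Multiset.erase_cons_tail_of_mem hmem, StClass.mk_unit] using ih hmem
  | @par A B Γ _ ih =>
    replace hmem := (Multiset.mem_cons.1 hmem).resolve_left (by simp)
    have hB : St.cop P Q ∈ B ::ₘ Γ := Multiset.mem_cons_of_mem hmem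
    simpa [Multiset.erase_cons_tail_of_mem hmem, Multiset.erase_cons_tail_of_mem hB,
      StClass.mk_par, add_assoc] using ih (Multiset.mem_cons_of_mem hB)
  | @cop A B Γ Δ hA hB ihA ihB =>
    have hA : 0 ≤ ⟦A⟧ + parSum Γ := parSum_cons A Γ ▸ hA.zero_le_parSum
    have hB : 0 ≤ ⟦B⟧ + parSum Δ := parSum_cons B Δ ▸ hB.zero_le_parSum
    rcases Multiset.mem_cons.1 hmem with hAB | hmem
    · cases hAB
      exact ⟨parSum Γ, parSum Δ, hA, hB, by simp⟩
    rw [Multiset.erase_cons_tail_of_mem hmem, parSum_cons, StClass.mk_cop]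
    rcases Multiset.mem_add.1 hmem with hΓ | hΔ
    · refine (ihA (Multiset.mem_cons_of_mem hΓ)).mono ?_
      rw [Multiset.erase_cons_tail_of_mem hΓ, Multiset.erase_add_left_pos _ hΓ, parSum_cons,
        parSum_add]
      exact StClass.add_le_cop_add hB _ _
    · refine (ihB (Multiset.mem_cons_of_mem hΔ)).mono ?_
      rw [Multiset.erase_cons_tail_of_mem hΔ, Multiset.erase_add_right_pos _ hΔ, parSum_cons,
        parSum_add, StClass.cop_comm, add_comm (parSum Γ)]
      exact StClass.add_le_cop_add hA _ _
  | mix hΓ hΔ ihΓ ihΔ =>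
    rcases Multiset.mem_add.1 hmem with hmem | hmem
    · rw [Multiset.erase_add_left_pos _ hmem, parSum_add]
      exact (ihΓ hmem).mono (le_add_of_nonneg_right hΔ.zero_le_parSum)
    · rw [Multiset.erase_add_right_pos _ hmem, parSum_add]
      exact (ihΔ hmem).mono (le_add_of_nonneg_left hΓ.zero_le_parSum)

end CutFree

/-! ### Phase semantics -/

section Orthogonal

variable {M : Type*} [AddCommMonoid M]

/-- The orthogonal of a set `S` in the phase space `M` with pole `p`: the elements whose sum with
every element of `S` lies in the pole. -/
def orth (p S : Set M) : Set M := {x | ∀ y ∈ S, x + y ∈ p}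

variable {p S T X : Set M}

lemma subset_orth_iff : S ⊆ orth p T ↔ S + T ⊆ p := Set.add_subset_iff.symm

lemma subset_orth_comm : S ⊆ orth p T ↔ T ⊆ orth p S := by
  rw [subset_orth_iff, subset_orth_iff, add_comm]

lemma subset_orth_orth : S ⊆ orth p (orth p S) := subset_orth_comm.1 subset_rfl

lemma orth_add_subset : orth p S + S ⊆ p := subset_orth_iff.1 subset_rfl

lemma orth_anti (h : S ⊆ T) : orth p T ⊆ orth p S := subset_orth_comm.1 (h.trans subset_orth_orth)

lemma orth_orth_orth : orth p (orth p (orth p S)) = orth p S :=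
  (orth_anti subset_orth_orth).antisymm subset_orth_orth

lemma orth_orth_subset_orth_iff : orth p (orth p S) ⊆ orth p T ↔ S ⊆ orth p T :=
  ⟨subset_orth_orth.trans, fun h => orth_orth_orth (S := T) ▸ orth_anti (orth_anti h)⟩

lemma subset_orth_add_iff : X ⊆ orth p (S + T) ↔ S ⊆ orth p (T + X) := by
  rw [subset_orth_iff, subset_orth_iff, add_comm, add_assoc]

lemma orth_orth_orth_add : orth p (orth p (orth p S) + T) = orth p (S + T) :=
  eq_of_forall_le_iff fun _ => by
    rw [subset_orth_add_iff, orth_orth_subset_orth_iff, ← subset_orth_add_iff]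

lemma orth_add_orth_orth : orth p (S + orth p (orth p T)) = orth p (S + T) := by
  rw [add_comm, orth_orth_orth_add, add_comm]

lemma orth_add_addSubmonoid (p : AddSubmonoid M) (S : Set M) :
    orth (p : Set M) (S + p) = orth p S := by
  refine (orth_anti (Set.subset_add_left S p.zero_mem)).antisymm (subset_orth_iff.2 ?_)
  calc
    orth (p : Set M) S + (S + p) = orth p S + S + p := (add_assoc _ _ _).symm
    _ ⊆ p + p := Set.add_subset_add_right orth_add_subset
    _ = p := by simp

lemma orth_addSubmonoid (p : AddSubmonoid M) : orth (p : Set M) p = p := by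
  have orth_zero : orth (p : Set M) 0 = p := by ext; simp [orth]
  rw [← orth_add_addSubmonoid, zero_add] at orth_zero
  exact orth_zero

end Orthogonal

section Interpretation

variable {M : Type*} [AddCommMonoid M] (p : AddSubmonoid M) (v : ℕ → Set M)

/-- The interpretation of structures by facts (biorthogonally closed sets) of the phase space `M`
with pole `p`, for a valuation `v` of the atoms.  The unit is interpreted by the pole, which is its
own orthogonal because it is a submonoid. -/
def interp : St → Set M
  | .unit => p
  | .pos n => orth p (v n)
  | .neg n => orth p (orth p (v n))
  | .par P Q => orth p (orth p (interp P) + orth p (interp Q))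
  | .cop P Q => orth p (orth p (interp P + interp Q))

variable {p v} {P Q R : St}

lemma orth_orth_interp (P : St) : orth p (orth p (interp p v P)) = interp p v P := by
  cases P with
  | unit => simp only [interp, orth_addSubmonoid]
  | _ => exact orth_orth_orth

lemma interp_congr (h : Equiv P Q) : interp p v P = interp p v Q := by
  induction h with
  | refl P => rfl
  | symm _ ih => exact ih.symm
  | trans _ _ ih ih' => exact ih.trans ih'
  | parComm P Q => simp only [interp, add_comm]
  | copComm P Q => simp only [interp, add_comm]
  | parAssoc P Q R => simp only [interp, orth_orth_orth_add, orth_add_orth_orth, add_assoc]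
  | copAssoc P Q R => simp only [interp, orth_orth_orth_add, orth_add_orth_orth, add_assoc]
  | parUnit P =>
    simp only [interp, orth_addSubmonoid, orth_add_addSubmonoid, orth_orth_interp]
  | copUnit P => simp only [interp, orth_add_addSubmonoid, orth_orth_interp]
  | parCongr _ _ ih ih' => simp only [interp, ih, ih']
  | copCongr _ _ ih ih' => simp only [interp, ih, ih']

lemma interp_fill_mono (C : Ctx) (h : interp p v P ⊆ interp p v Q) :
    interp p v (C.fill P) ⊆ interp p v (C.fill Q) := by
  induction C with
  | hole => exact h
  | parL C R ih => exact orth_anti (Set.add_subset_add_right (orth_anti ih))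
  | parR R C ih => exact orth_anti (Set.add_subset_add_left (orth_anti ih))
  | copL C R ih => exact orth_anti (orth_anti (Set.add_subset_add_right ih))
  | copR R C ih => exact orth_anti (orth_anti (Set.add_subset_add_left ih))

lemma interp_negS (hP : P.isAtom) : interp p v P.negS = orth p (interp p v P) := by
  cases P with
  | pos n => rfl
  | neg n => exact orth_orth_orth.symm
  | _ => exact hP.elim

lemma interp_aiDown (hP : P.isAtom) : interp p v .unit ⊆ interp p v (.par P P.negS) := by
  rw [interp, interp, interp_negS hP, orth_orth_interp]
  exact (orth_addSubmonoid p).superset.trans (orth_anti orth_add_subset)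

lemma interp_switch (P Q R : St) :
    interp p v (.cop P (.par Q R)) ⊆ interp p v (.par (.cop P Q) R) := by
  simp only [interp, orth_orth_orth]
  generalize interp p v P = a, interp p v Q = b, interp p v R = c
  have add_orth_add : a + orth p (a + b) ⊆ orth p b := by
    rw [subset_orth_iff, add_right_comm, add_comm]
    exact orth_add_subset
  rw [orth_orth_subset_orth_iff, subset_orth_iff]
  calc
    a + orth p (orth p b + orth p c) + (orth p (a + b) + orth p c)
      = orth p (orth p b + orth p c) + (a + orth p (a + b) + orth p c) := by abel
    _ ⊆ orth p (orth p b + orth p c) + (orth p b + orth p c) := by gcongr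
    _ ⊆ p := orth_add_subset

theorem interp_mono (h : DerivLBV P Q) : interp p v P ⊆ interp p v Q := by
  induction h with
  | eqv e => exact (interp_congr e).subset
  | step s _ ih =>
    obtain ⟨r, hr, C, P', Q', root, hP, hQ⟩ := s
    refine Set.Subset.trans ?_ ih
    rw [interp_congr hP, ← interp_congr hQ]
    apply interp_fill_mono
    cases root with
    | aiDown A hA => exact interp_aiDown hA
    | aiUp A hA => simp [LBVRules] at hr
    | s P Q R => exact interp_switch P Q R

lemma interp_par_subset_orth_singleton {x y : M} (hP : interp p v P ⊆ orth p {x})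
    (hQ : interp p v Q ⊆ orth p {y}) : interp p v (.par P Q) ⊆ orth p {x + y} := by
  rw [← Set.singleton_add_singleton]
  exact orth_anti (Set.add_subset_add (subset_orth_comm.1 hP) (subset_orth_comm.1 hQ))

end Interpretation

section Completeness

/-- The pole of the phase space of sequents. -/
def cutFreePole : AddSubmonoid (Multiset St) where
  carrier := {Γ | CutFree Γ}
  zero_mem' := .nil
  add_mem' := .mix

/-- The interpretation of structures in the phase space of sequents, with each atom valued at the
sequent consisting of it. -/
def seqInterp : St → Set (Multiset St) := interp cutFreePole fun n => {{.pos n}}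

lemma mem_orth_cutFreePole_singleton {Γ Δ : Multiset St} :
    Γ ∈ orth cutFreePole {Δ} ↔ CutFree (Δ + Γ) := by
  simp [orth, cutFreePole, add_comm]

lemma seqInterp_subset_orth_singleton (P : St) : seqInterp P ⊆ orth cutFreePole {{P}} := by
  induction P with
  | unit => exact fun Γ hΓ => mem_orth_cutFreePole_singleton.2 (.unit hΓ)
  | pos n => exact subset_rfl
  | neg n =>
    refine orth_anti (Set.singleton_subset_iff.2 ?_)
    exact mem_orth_cutFreePole_singleton.2 (.ax n)
  | par P Q ihP ihQ =>
    refine (interp_par_subset_orth_singleton ihP ihQ).trans fun Γ hΓ => ?_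
    rw [mem_orth_cutFreePole_singleton, add_assoc] at hΓ
    exact mem_orth_cutFreePole_singleton.2 (.par hΓ)
  | cop P Q ihP ihQ =>
    refine orth_orth_subset_orth_iff.2 ?_
    rintro _ ⟨Γ, hΓ, Δ, hΔ, rfl⟩
    exact mem_orth_cutFreePole_singleton.2 (.cop
      (mem_orth_cutFreePole_singleton.1 (ihP hΓ)) (mem_orth_cutFreePole_singleton.1 (ihQ hΔ)))

lemma seqInterp_subset_orth_of_mk_eq_parSum {P : St} {Γ : Multiset St} (h : ⟦P⟧ = parSum Γ) :
    seqInterp P ⊆ orth cutFreePole {Γ} := by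
  induction Γ using Multiset.induction_on generalizing P with
  | empty =>
    rw [parSum_zero, ← StClass.mk_unit] at h
    rw [seqInterp, interp_congr (Quotient.exact h)]
    exact fun Δ (hΔ : CutFree Δ) => mem_orth_cutFreePole_singleton.2 (by rwa [zero_add])
  | cons Q Γ ih =>
    obtain ⟨R, hR⟩ := Quotient.exists_rep (parSum Γ)
    rw [parSum_cons, ← hR, ← StClass.mk_par] at h
    rw [seqInterp, interp_congr (Quotient.exact h)]
    exact interp_par_subset_orth_singleton (seqInterp_subset_orth_singleton Q) (ih hR)

theorem CutFree.of_zero_le_parSum {Γ : Multiset St} (h : 0 ≤ parSum Γ) : CutFree Γ := by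
  obtain ⟨P, hP⟩ := Quotient.exists_rep (parSum Γ)
  rw [← hP] at h
  have zero_mem : 0 ∈ seqInterp .unit := CutFree.nil
  have zero_mem_orth : 0 ∈ orth cutFreePole {Γ} :=
    seqInterp_subset_orth_of_mk_eq_parSum hP (interp_mono (StClass.zero_le_mk.1 h) zero_mem)
  simpa using mem_orth_cutFreePole_singleton.1 zero_mem_orth

end Completeness

/-! ### Splitting and context reduction -/

theorem StClass.splitting {a b k : StClass} (h : 0 ≤ cop a b + k) : Splits a b k := by
  induction a, b using Quotient.inductionOn₂ with | _ P Q
  induction k using Quotient.inductionOn with | _ K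
  have cutFree : CutFree {.cop P Q, K} := .of_zero_le_parSum (by simpa [mk_cop] using h)
  simpa using cutFree.splits (Multiset.mem_cons_self _ _)

lemma exists_context_reduction (P : St) (C : Ctx) (k : StClass) (h : 0 ≤ ⟦C.fill P⟧ + k) :
    ∃ u : StClass, (∀ X : St, u + ⟦X⟧ ≤ ⟦C.fill X⟧ + k) ∧ 0 ≤ u + ⟦P⟧ := by
  induction C generalizing k with
  | hole => exact ⟨k, fun X => (add_comm _ _).le, by rwa [add_comm]⟩
  | parL C R ih =>
    simp only [Ctx.fill, StClass.mk_par, add_assoc] at h ⊢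
    exact ih _ h
  | parR R C ih =>
    simp only [Ctx.fill, StClass.mk_par, add_comm ⟦R⟧, add_assoc] at h ⊢
    exact ih _ h
  | copL C R ih =>
    simp only [Ctx.fill, StClass.mk_cop] at h ⊢
    obtain ⟨k₁, h₁, hk⟩ := (StClass.splitting h).exists_reduction
    obtain ⟨u, hX, hP⟩ := ih k₁ h₁
    exact ⟨u, fun X => (hX X).trans (hk _), hP⟩
  | copR R C ih =>
    simp only [Ctx.fill, StClass.mk_cop, StClass.cop_comm ⟦R⟧] at h ⊢
    obtain ⟨k₁, h₁, hk⟩ := (StClass.splitting h).exists_reduction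
    obtain ⟨u, hX, hP⟩ := ih k₁ h₁
    exact ⟨u, fun X => (hX X).trans (hk _), hP⟩

/-- Context reduction for LBV.
For every structure `P` and context `C{ }` such that `C{P}` is provable in
LBV, there is a structure `U` such that (a) for every structure `X` there is
a derivation in LBV from `[U,X]` to `C{X}`, and (b) `[U,P]` is provable in
LBV. -/
theorem context_reduction (P : St) (C : Ctx)
    (h : ProofLBV (C.fill P)) :
    ∃ U : St,
      (∀ X : St, DerivLBV (.par U X) (C.fill X)) ∧
      ProofLBV (.par U P) := by
  have nonneg : 0 ≤ (⟦C.fill P⟧ + 0 : StClass) := by rwa [add_zero, StClass.zero_le_mk]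
  obtain ⟨⟨U⟩, hX, hP⟩ := exists_context_reduction P C 0 nonneg
  simp only [add_zero] at hX
  exact ⟨U, fun X => StClass.mk_le_mk.1 (hX X), StClass.zero_le_mk.1 hP⟩

end LBV
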